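/- arXiv:2512.03718 — 2 statements merged into one kernel-verified Lean document; each statement's English description precedes it below -/
import Mathlib

section
/- Suppose there exists an m×n matrix M* over Σ that is fair w.r.t. γ with d(M,M*) ≤ k and dr(M*) ≤ r. Then there exists an m×n matrix M' over Σ that is fair w.r.t. γ such that: (i) dr(M') ≤ r; (ii) every type of M' is a type of M; (iii) for every M-fair type τ, either no row i has M[i,⋆] = τ and M'[i,⋆] ≠ τ, or (no row i has M'[i,⋆] = τ and M[i,⋆] ≠ τ, and all rows i with M[i,⋆] = τ and M'[i,⋆] ≠ τ have the same type in M'); and (iv) c̃ · d(M,M') ≤ (5·c̃ − 3) · k. -/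
variable {m n c : ℕ} {A : Type*} [Fintype A] [DecidableEq A]

/-- The set of distinct row types of a matrix. -/
def types (M : Fin m → Fin n → A) : Finset (Fin n → A) :=
  Finset.univ.image (fun i => M i)

/-- The number of distinct rows of a matrix. -/
def dr (M : Fin m → Fin n → A) : ℕ := (types M).card

/-- The cluster of a type `τ` in `M`: the set of rows whose type is `τ`. -/
def cluster (M : Fin m → Fin n → A) (τ : Fin n → A) : Finset (Fin m) :=
  Finset.univ.filter (fun i => M i = τ)

/-- The edit cost between two matrices: the number of positions where they differ. -/
def editCost (M M' : Fin m → Fin n → A) : ℕ :=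
  ((Finset.univ : Finset (Fin m × Fin n)).filter (fun p => M p.1 p.2 ≠ M' p.1 p.2)).card

/-- The number of occurrences of color `z` in the coloring `γ`. -/
def colorCount (γ : Fin m → Fin c) (z : Fin c) : ℕ :=
  (Finset.univ.filter (fun i => γ i = z)).card

/-- A set of rows is fair w.r.t. `γ` if it witnesses the same color distribution as `γ`. -/
def fairSet (γ : Fin m → Fin c) (S : Finset (Fin m)) : Prop :=
  ∀ z : Fin c, m * (S.filter (fun i => γ i = z)).card = colorCount γ z * S.card

/-- A matrix is fair if the cluster of each of its types is fair. -/
def fairMatrix (γ : Fin m → Fin c) (M' : Fin m → Fin n → A) : Prop :=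
  ∀ τ ∈ types M', fairSet γ (cluster M' τ)

/-- The fairlet size `c̃ = m / gcd(|γ|_1, …, |γ|_c)`. -/
def fairletSize (γ : Fin m → Fin c) : ℕ :=
  m / Finset.univ.gcd (colorCount γ)

/-!
Let `N` be the given fair solution and `c̃` the fairlet size. Merge the unfair clusters of `M` into
one; this clusters the rows fairly, and so does `N`. Split both clusterings into fairlets. Since
all fairlets have `c̃` rows, averaging over a Birkhoff decomposition of their intersection pattern
yields one representative row for each fairlet, common to both families, such that the costs of
the representatives sum up to at most `d(M, N) / c̃`. Now let every row in a fair cluster of `M` be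
edited as the representative of its fairlet. The rows of `N` are permuted within their colors to
make this possible, and a transposition costs at most twice the new distance it realizes, so the
permuted `N` is at distance at most `(3 - 2 / c̃) d(M, N)` from `M`, and the rows in a fair cluster
of `M` that get a given type form a fair set.

It remains to round. Replacing the types of `N` by nearest types of `M` costs at most `d(M, N)` more
and may merge clusters, which preserves fairness. Finally every fair cluster of `M` moves as a whole
to a nearest one of the resulting types, which does not increase the cost.
-/

open Finset
open scoped BigOperators

section Matching

variable {K R ι : Type*} [Field K] [LinearOrder K] [IsStrictOrderedRing K] [Fintype R] [Fintype ι]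
  [DecidableEq ι]

theorem exists_perm_sum_le_of_mem_doublyStochastic {B : Matrix ι ι K}
    (hB : B ∈ doublyStochastic K ι) (w : ι → ι → K) :
    ∃ σ : Equiv.Perm ι, (∀ x, 0 < B x (σ x)) ∧ ∑ x, w x (σ x) ≤ ∑ x, ∑ y, B x y * w x y := by
  obtain ⟨v, hv_nonneg, hv_sum, rfl⟩ := exists_eq_sum_perm_of_mem_doublyStochastic hB
  set B := ∑ σ, v σ • σ.permMatrix K
  have hB_apply : ∀ x y, B x y = ∑ σ : Equiv.Perm ι, if σ x = y then v σ else 0 := fun x y => by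
    simp [B, Matrix.sum_apply, Equiv.Perm.permMatrix, PEquiv.toMatrix_apply, eq_comm]
  have h_average : ∑ x, ∑ y, B x y * w x y = ∑ σ, v σ * ∑ x, w x (σ x) := by
    simp only [hB_apply, sum_mul, ite_mul, zero_mul, mul_sum]
    rw [sum_congr rfl fun x _ => sum_comm, sum_comm]
    simp only [sum_ite_eq, mem_univ, if_true]
  have h_support : ∀ u : Equiv.Perm ι → K, ∑ σ with 0 < v σ, v σ * u σ = ∑ σ, v σ * u σ :=
    fun u => sum_filter_of_ne fun σ _ h => (hv_nonneg σ).lt_of_ne' (left_ne_zero_of_mul h)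
  obtain ⟨σ, hσ, hle⟩ : ∃ σ ∈ univ.filter fun σ => 0 < v σ,
      v σ * ∑ x, w x (σ x) ≤ v σ * ∑ x, ∑ y, B x y * w x y := by
    refine exists_le_of_sum_le (nonempty_of_sum_ne_zero (f := v) ?_) ?_
    · have h_one := h_support 1
      simp only [Pi.one_apply, mul_one, hv_sum] at h_one
      exact h_one ▸ one_ne_zero
    · rw [h_support, h_support, ← sum_mul, hv_sum, one_mul, h_average]
  have hσ_pos : 0 < v σ := (mem_filter.1 hσ).2
  refine ⟨σ, fun x => ?_, le_of_mul_le_mul_left hle hσ_pos⟩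
  rw [hB_apply]
  refine sum_pos' (fun τ _ => ?_) ⟨σ, mem_univ σ, by simpa using hσ_pos⟩
  split_ifs
  exacts [hv_nonneg τ, le_rfl]

variable (K) in
/-- The contingency table of two labellings `q` and `p`, divided by `C`. It is doubly stochastic
when all fibres of `q` and `p` have size `C`. -/
def contingencyMatrix (q p : R → ι) (C : ℕ) : Matrix ι ι K :=
  Matrix.of fun x y => (#{i | q i = x ∧ p i = y} : K) / C

theorem contingencyMatrix_mem_doublyStochastic {q p : R → ι} {C : ℕ} (hC : C ≠ 0)
    (hq : ∀ x, #{i | q i = x} = C) (hp : ∀ y, #{i | p i = y} = C) :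
    contingencyMatrix K q p C ∈ doublyStochastic K ι := by
  have hC' : (C : K) ≠ 0 := Nat.cast_ne_zero.2 hC
  refine mem_doublyStochastic_iff_sum.2
    ⟨fun x y => div_nonneg (Nat.cast_nonneg _) (Nat.cast_nonneg _), fun x => ?_, fun y => ?_⟩
  · have h_row : ∑ y, #{i | q i = x ∧ p i = y} = C := by
      simp only [← filter_filter,
        ← card_eq_sum_card_fiberwise fun _ _ => mem_coe.2 (mem_univ _), hq]
    simp only [contingencyMatrix, Matrix.of_apply, ← sum_div, ← Nat.cast_sum, h_row, div_self hC']
  · have h_col : ∑ x, #{i | q i = x ∧ p i = y} = C := by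
      simp only [and_comm (b := p _ = y), ← filter_filter,
        ← card_eq_sum_card_fiberwise fun _ _ => mem_coe.2 (mem_univ _), hp]
    simp only [contingencyMatrix, Matrix.of_apply, ← sum_div, ← Nat.cast_sum, h_col, div_self hC']

theorem exists_common_transversal_sum_le {q p : R → ι} {C : ℕ} (hC : C ≠ 0)
    (hq : ∀ x, #{i | q i = x} = C) (hp : ∀ y, #{i | p i = y} = C) (w : R → K) :
    ∃ (π : Equiv.Perm ι) (s : ι → R), (∀ x, q (s x) = x) ∧ (∀ x, p (s x) = π x) ∧
      C * ∑ x, w (s x) ≤ ∑ i, w i := by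
  have hC' : (0 : K) < C := Nat.cast_pos.2 (Nat.pos_of_ne_zero hC)
  let cell x y : Finset R := {i | q i = x ∧ p i = y}
  obtain ⟨π, hπ_pos, hπ_le⟩ := exists_perm_sum_le_of_mem_doublyStochastic
    (contingencyMatrix_mem_doublyStochastic (K := K) hC hq hp) fun x y => 𝔼 i ∈ cell x y, w i
  have h_nonempty : ∀ x, (cell x (π x)).Nonempty := fun x => by
    have := hπ_pos x
    rw [contingencyMatrix, Matrix.of_apply, div_pos_iff_of_pos_right hC'] at this
    exact card_pos.1 (Nat.cast_pos.1 this)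
  choose s hs_mem hs_le using fun x =>
    exists_le_of_expect_le (h_nonempty x) (le_refl (𝔼 i ∈ cell x (π x), w i))
  simp only [cell, mem_filter, mem_univ, true_and] at hs_mem
  refine ⟨π, s, fun x => (hs_mem x).1, fun x => (hs_mem x).2, ?_⟩
  have h_cells : ∑ x, ∑ y, contingencyMatrix K q p C x y * 𝔼 i ∈ cell x y, w i
      = (∑ i, w i) / C := by
    simp only [contingencyMatrix, Matrix.of_apply, div_mul_eq_mul_div, ← sum_div]
    congr 1
    calc ∑ x, ∑ y, (#(cell x y) : K) * 𝔼 i ∈ cell x y, w i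
        = ∑ x, ∑ y, ∑ i with q i = x ∧ p i = y, w i := by simp only [card_mul_expect, cell]
      _ = ∑ i, w i := by simp only [← filter_filter, sum_fiberwise]
  calc (C : K) * ∑ x, w (s x) ≤ C * ∑ x, 𝔼 i ∈ cell x (π x), w i := by
        gcongr with x; exact hs_le x
    _ ≤ C * ((∑ i, w i) / C) := by gcongr; exact hπ_le.trans_eq h_cells
    _ = ∑ i, w i := mul_div_cancel₀ _ hC'.ne'

end Matching

section Permutations

variable {R X : Type*} [Fintype R]

theorem exists_perm_comp_eq_of_card_fiber_eq [DecidableEq X] {u v : R → X}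
    (h : ∀ x, #{i | u i = x} = #{i | v i = x}) :
    ∃ G : Equiv.Perm R, (∀ i, v (G i) = u i) ∧ ∀ i, u i = v i → G i = i := by
  have h_moved : ∀ x, #{i | ¬u i = v i ∧ u i = x} = #{i | ¬u i = v i ∧ v i = x} := fun x => by
    have hx := h x
    rw [← card_filter_add_card_filter_not (s := {i | u i = x}) fun i => u i = v i,
      ← card_filter_add_card_filter_not (s := {i | v i = x}) fun i => u i = v i] at hx
    simp only [filter_filter, and_comm (b := _ = x)] at hx ⊢
    have h_fixed : #{i | u i = x ∧ u i = v i} = #{i | v i = x ∧ u i = v i} :=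
      congrArg card (filter_congr fun i _ => by grind)
    omega
  have h_card : ∀ x, Fintype.card {i : {i // u i ≠ v i} // u i = x} =
      Fintype.card {i : {i // u i ≠ v i} // v i = x} := fun x => by
    rw [Fintype.card_congr (Equiv.subtypeSubtypeEquivSubtypeInter _ (u · = x)),
      Fintype.card_congr (Equiv.subtypeSubtypeEquivSubtypeInter _ (v · = x)),
      Fintype.card_subtype, Fintype.card_subtype, h_moved]
  let e : Equiv.Perm {i // u i ≠ v i} :=
    Equiv.ofFiberEquiv fun x => Fintype.equivOfCardEq (h_card x)
  have he : ∀ i, v (e i) = u i := Equiv.ofFiberEquiv_map (g := fun i : {i // u i ≠ v i} => v i) _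
  have h_fix : ∀ i, u i = v i → e.ofSubtype i = i := fun i hi =>
    Equiv.Perm.ofSubtype_apply_of_not_mem e (not_not.2 hi)
  refine ⟨e.ofSubtype, fun i => ?_, h_fix⟩
  by_cases hi : u i = v i
  · rw [h_fix i hi, hi]
  · rw [Equiv.Perm.ofSubtype_apply_of_mem e hi, he]

theorem sum_swap_mul_le [DecidableEq R] {d : R → R → ℕ}
    (hd : ∀ i i' j j', d i j ≤ d i j' + d i' j' + d i' j) (H : Equiv.Perm R) (i j : R) :
    ∑ x, d x ((Equiv.swap (H i) j * H) x) ≤ ∑ x, d x (H x) + 2 * d i j := by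
  obtain ⟨y, rfl⟩ := H.surjective j
  rcases eq_or_ne i y with rfl | hiy
  · simp
  have h_split : ∀ f : R → ℕ, ∑ x, f x = f i + f y + ∑ x ∈ {i, y}ᶜ, f x := fun f => by
    rw [← sum_add_sum_compl {i, y} f, sum_pair hiy]
  have h_rest : ∀ x ∈ ({i, y} : Finset R)ᶜ, (Equiv.swap (H i) (H y) * H) x = H x := by
    simp only [mem_compl, mem_insert, mem_singleton, not_or]
    exact fun x hx => Equiv.swap_apply_of_ne_of_ne (H.injective.ne hx.1) (H.injective.ne hx.2)
  rw [h_split, h_split fun x => d x (H x), sum_congr rfl fun x hx => by rw [h_rest x hx],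
    Equiv.Perm.mul_apply, Equiv.Perm.mul_apply, Equiv.swap_apply_left, Equiv.swap_apply_right]
  have := hd y i (H i) (H y)
  omega

-- The points of `D` are handled one at a time: post-composing `H` with the transposition of `H i`
-- and `G i` corrects `H` at `i` without disturbing any point where `H` already agrees with `G`.
theorem exists_perm_eqOn_sum_le {d : R → R → ℕ}
    (hd : ∀ i i' j j', d i j ≤ d i j' + d i' j' + d i' j) {col : R → X} {G : Equiv.Perm R}
    (hG : ∀ i, col (G i) = col i) (D : Finset R) :
    ∃ H : Equiv.Perm R, (∀ i, col (H i) = col i) ∧ (∀ i, i ∈ D ∨ G i = i → H i = G i) ∧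
      ∑ i, d i (H i) ≤ ∑ i, d i i + 2 * ∑ i ∈ D, d i (G i) := by
  classical
  induction D using Finset.induction_on with
  | empty => exact ⟨1, by simp [eq_comm]⟩
  | insert i D hi ih =>
    obtain ⟨H, hH_col, hH_eq, hH_sum⟩ := ih
    refine ⟨Equiv.swap (H i) (G i) * H, fun j => ?_, fun j hj => ?_, ?_⟩
    · rw [Equiv.Perm.mul_apply, Equiv.apply_swap_eq_self ((hH_col i).trans (hG i).symm), hH_col]
    · rcases eq_or_ne j i with rfl | hji
      · simp
      · have hHj : H j = G j := hH_eq j (by simpa [hji] using hj)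
        rw [Equiv.Perm.mul_apply, Equiv.swap_apply_of_ne_of_ne (H.injective.ne hji)
          (hHj.trans_ne (G.injective.ne hji)), hHj]
    · rw [sum_insert hi]
      have := sum_swap_mul_le hd H i (G i)
      omega

end Permutations

section Fairness

variable {γ : Fin m → Fin c} {B B' : Type*} [DecidableEq B] [DecidableEq B']

instance (S : Finset (Fin m)) : Decidable (fairSet γ S) :=
  inferInstanceAs (Decidable (∀ z, m * #{i ∈ S | γ i = z} = colorCount γ z * #S))

/-- The signed contribution of row `i` to the imbalance of color `z`, scaled by `m` to stay
integral; a set is fair when all its imbalances vanish. -/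
def colorExcess (γ : Fin m → Fin c) (z : Fin c) (i : Fin m) : ℤ :=
  (if γ i = z then (m : ℤ) else 0) - colorCount γ z

theorem fairSet_iff_sum_colorExcess {S : Finset (Fin m)} :
    fairSet γ S ↔ ∀ z, ∑ i ∈ S, colorExcess γ z i = 0 := by
  refine forall_congr' fun z => ?_
  simp only [colorExcess, sum_sub_distrib, ← sum_filter, sum_const, nsmul_eq_mul, sub_eq_zero]
  rw [mul_comm m, mul_comm (colorCount γ z)]
  exact_mod_cast Iff.rfl

theorem fairSet_univ : fairSet γ univ := fun _ => by
  rw [card_univ, Fintype.card_fin, mul_comm, colorCount]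

theorem fairSet_empty : fairSet γ ∅ := fun _ => by simp

theorem fairSet.sdiff {S T : Finset (Fin m)} (hS : fairSet γ S) (hT : fairSet γ T) (h : T ⊆ S) :
    fairSet γ (S \ T) := by
  rw [fairSet_iff_sum_colorExcess] at *
  intro z
  rw [sum_sdiff_eq_sub h, hS, hT, sub_zero]

theorem fairSet_of_fairSet_fiber {S : Finset (Fin m)} {f : Fin m → B}
    (h : ∀ b, fairSet γ {i ∈ S | f i = b}) : fairSet γ S := by
  simp only [fairSet_iff_sum_colorExcess] at *
  intro z
  rw [← sum_fiberwise_of_maps_to fun i hi => mem_image_of_mem f hi]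
  exact sum_eq_zero fun b _ => h b z

theorem fairSet.filter_eq_none {S : Finset (Fin m)} (hS : fairSet γ S) {f : Fin m → Option B}
    (h : ∀ b, fairSet γ {i ∈ S | f i = some b}) : fairSet γ {i ∈ S | f i = none} := by
  have h_some : fairSet γ {i ∈ S | f i ≠ none} := by
    refine fairSet_of_fairSet_fiber (f := f) fun b => ?_
    rw [filter_filter]
    cases b with
    | none => simpa using fairSet_empty
    | some b =>
      convert h b using 2
      grind
  convert hS.sdiff h_some (filter_subset _ _) using 1
  grind

/-- A fair clustering of the rows: all clusters of the labelling `f` are fair, empty ones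
included. -/
def FairLabeling (γ : Fin m → Fin c) (f : Fin m → B) : Prop :=
  ∀ b, fairSet γ {i | f i = b}

theorem fairMatrix_iff_fairLabeling {α : Type*} [DecidableEq α] {M : Fin m → Fin n → α} :
    fairMatrix γ M ↔ FairLabeling γ M := by
  refine ⟨fun h τ => ?_, fun h τ _ => h τ⟩
  by_cases hτ : τ ∈ types M
  · exact h τ hτ
  · convert fairSet_empty
    exact filter_eq_empty_iff.2 fun i _ hi => hτ (hi ▸ mem_image_of_mem _ (mem_univ i))

theorem FairLabeling.fairSet_filter {f : Fin m → B} (hf : FairLabeling γ f) (p : B → Prop)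
    [DecidablePred p] : fairSet γ {i | p (f i)} := by
  refine fairSet_of_fairSet_fiber (f := f) fun b => ?_
  by_cases hb : p b
  · convert hf b using 1
    grind
  · convert fairSet_empty
    grind

theorem FairLabeling.comp {f : Fin m → B} (hf : FairLabeling γ f) (φ : B → B') :
    FairLabeling γ fun i => φ (f i) :=
  fun b => hf.fairSet_filter fun x => φ x = b

theorem FairLabeling.comp_perm {f : Fin m → B} (hf : FairLabeling γ f) {H : Equiv.Perm (Fin m)}
    (hH : ∀ i, γ (H i) = γ i) : FairLabeling γ fun i => f (H i) := by
  intro b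
  have hfb := hf b
  rw [fairSet_iff_sum_colorExcess] at hfb ⊢
  intro z
  rw [← hfb z, sum_filter, sum_filter]
  exact Fintype.sum_equiv H _ _ fun i => by simp only [colorExcess, hH]

theorem FairLabeling.prodMk {f : Fin m → Option B} {h : Fin m → B'} (hh : FairLabeling γ h)
    (hfh : ∀ b b', fairSet γ {i | f i = some b ∧ h i = b'}) :
    FairLabeling γ fun i => (f i, h i) := by
  rintro ⟨b, b'⟩
  simp only [Prod.mk.injEq, and_comm (a := f _ = _), ← filter_filter] at hfh ⊢
  cases b with
  | none => exact (hh b').filter_eq_none fun b => hfh b b'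
  | some b => exact hfh b b'

end Fairness

section Fairlets

variable {γ : Fin m → Fin c} {S T : Finset (Fin m)} {B : Type*} [DecidableEq B]

/-- The number of rows of color `z` in a fairlet. -/
def fairletCount (γ : Fin m → Fin c) (z : Fin c) : ℕ :=
  colorCount γ z / univ.gcd (colorCount γ)

/-- A fairlet: a fair set of the smallest possible positive size. -/
def IsFairlet (γ : Fin m → Fin c) (S : Finset (Fin m)) : Prop :=
  fairSet γ S ∧ #S = fairletSize γ

theorem sum_colorCount (γ : Fin m → Fin c) : ∑ z, colorCount γ z = m := by
  simpa [colorCount] using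
    (card_eq_sum_card_fiberwise (f := γ) (s := univ) fun _ _ => mem_coe.2 (mem_univ _)).symm

theorem gcd_mul_fairletCount (γ : Fin m → Fin c) (z : Fin c) :
    univ.gcd (colorCount γ) * fairletCount γ z = colorCount γ z :=
  Nat.mul_div_cancel' (gcd_dvd (mem_univ z))

theorem gcd_mul_fairletSize (γ : Fin m → Fin c) : univ.gcd (colorCount γ) * fairletSize γ = m :=
  Nat.mul_div_cancel' <| (dvd_sum fun _ => gcd_dvd).trans (sum_colorCount γ).dvd

theorem gcd_colorCount_pos (hm : 0 < m) (γ : Fin m → Fin c) : 0 < univ.gcd (colorCount γ) :=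
  Nat.pos_of_mul_pos_right ((gcd_mul_fairletSize γ).symm ▸ hm)

theorem fairletSize_pos (hm : 0 < m) (γ : Fin m → Fin c) : 0 < fairletSize γ :=
  Nat.pos_of_mul_pos_left ((gcd_mul_fairletSize γ).symm ▸ hm)

theorem sum_fairletCount (hm : 0 < m) (γ : Fin m → Fin c) :
    ∑ z, fairletCount γ z = fairletSize γ := by
  refine Nat.eq_of_mul_eq_mul_left (gcd_colorCount_pos hm γ) ?_
  simp only [mul_sum, gcd_mul_fairletCount, sum_colorCount, gcd_mul_fairletSize]

theorem fairSet_iff_fairletSize_mul (hm : 0 < m) :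
    fairSet γ S ↔ ∀ z, fairletSize γ * #{i ∈ S | γ i = z} = fairletCount γ z * #S := by
  refine forall_congr' fun z => ?_
  conv_rhs => rw [← Nat.mul_right_inj (gcd_colorCount_pos hm γ).ne', ← mul_assoc, ← mul_assoc,
    gcd_mul_fairletSize, gcd_mul_fairletCount]

theorem fairSet.fairletSize_dvd_card (hm : 0 < m) (hS : fairSet γ S) : fairletSize γ ∣ #S := by
  have h : m ∣ univ.gcd fun z => colorCount γ z * #S := dvd_gcd fun z _ => ⟨_, (hS z).symm⟩
  rw [Finset.gcd_mul_right, normalize_eq] at h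
  conv_lhs at h => rw [← gcd_mul_fairletSize γ]
  exact Nat.dvd_of_mul_dvd_mul_left (gcd_colorCount_pos hm γ) h

theorem IsFairlet.card_filter (hm : 0 < m) (hS : IsFairlet γ S) (z : Fin c) :
    #{i ∈ S | γ i = z} = fairletCount γ z := by
  have h := (fairSet_iff_fairletSize_mul hm).1 hS.1 z
  rw [hS.2, mul_comm] at h
  exact Nat.eq_of_mul_eq_mul_right (fairletSize_pos hm γ) h

theorem isFairlet_of_card_filter (hm : 0 < m)
    (h : ∀ z, #{i ∈ S | γ i = z} = fairletCount γ z) : IsFairlet γ S := by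
  have h_card : #S = fairletSize γ := by
    rw [card_eq_sum_card_fiberwise (f := γ) (t := univ) fun _ _ => mem_coe.2 (mem_univ _),
      ← sum_fairletCount hm]
    exact sum_congr rfl fun z _ => h z
  exact ⟨(fairSet_iff_fairletSize_mul hm).2 fun z => by rw [h, h_card, mul_comm], h_card⟩

theorem fairSet.exists_isFairlet_subset (hm : 0 < m) (hS : fairSet γ S) (hne : S.Nonempty) :
    ∃ T ⊆ S, IsFairlet γ T := by
  have h_size : fairletSize γ ≤ #S :=
    Nat.le_of_dvd hne.card_pos (hS.fairletSize_dvd_card hm)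
  have h_count : ∀ z, fairletCount γ z ≤ #{i ∈ S | γ i = z} := fun z => by
    refine Nat.le_of_mul_le_mul_left ?_ (fairletSize_pos hm γ)
    rw [(fairSet_iff_fairletSize_mul hm).1 hS z, mul_comm]
    exact Nat.mul_le_mul_left _ h_size
  choose T hT_sub hT_card using fun z => exists_subset_card_eq (h_count z)
  refine ⟨{i ∈ S | i ∈ T (γ i)}, filter_subset _ _, isFairlet_of_card_filter hm fun z => ?_⟩
  rw [← hT_card z]
  congr 1
  grind

theorem fairSet.exists_fairlet_labeling (hm : 0 < m) (hS : fairSet γ S) :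
    ∃ q : Fin m → ℕ, ∀ i ∈ S, IsFairlet γ {j ∈ S | q j = q i} := by
  induction S using Finset.strongInduction with
  | H S ih =>
    rcases S.eq_empty_or_nonempty with rfl | hne
    · exact ⟨0, by simp⟩
    obtain ⟨T, hTS, hT⟩ := hS.exists_isFairlet_subset hm hne
    have hT_ne : T.Nonempty := card_pos.1 (hT.2 ▸ fairletSize_pos hm γ)
    obtain ⟨q, hq⟩ := ih (S \ T) (sdiff_ssubset hTS hT_ne) (hS.sdiff hT.1 hTS)
    refine ⟨fun i => if i ∈ T then 0 else q i + 1, fun i hi => ?_⟩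
    by_cases hiT : i ∈ T
    · convert hT using 1
      grind
    · convert hq i (mem_sdiff.2 ⟨hi, hiT⟩) using 1
      grind

theorem FairLabeling.exists_fairlet_refinement (hm : 0 < m) {f : Fin m → B}
    (hf : FairLabeling γ f) :
    ∃ q : Fin m → Fin (univ.gcd (colorCount γ)),
      (∀ x, IsFairlet γ {i | q i = x}) ∧ f.FactorsThrough q := by
  choose r hr using fun b => (hf b).exists_fairlet_labeling hm
  let q₀ : Fin m → B × ℕ := fun i => (f i, r (f i) i)
  have hq₀ : ∀ i, IsFairlet γ {j | q₀ j = q₀ i} := fun i => by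
    convert hr (f i) i (by simp) using 1
    grind
  have h_card : #(univ.image q₀) = univ.gcd (colorCount γ) := by
    refine Nat.eq_of_mul_eq_mul_right (fairletSize_pos hm γ) ?_
    have h_blocks : ∀ x ∈ univ.image q₀, #{j | q₀ j = x} = fairletSize γ := by
      simpa only [mem_image, mem_univ, true_and, forall_exists_index, forall_apply_eq_imp_iff]
        using fun i => (hq₀ i).2
    rw [gcd_mul_fairletSize, ← sum_const_nat h_blocks, ← card_eq_sum_card_image, card_fin]
  let e := equivFinOfCardEq h_card
  refine ⟨fun i => e ⟨q₀ i, mem_image_of_mem q₀ (mem_univ i)⟩, fun x => ?_, fun i j hij => ?_⟩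
  · obtain ⟨⟨y, hy⟩, rfl⟩ := e.surjective x
    obtain ⟨i, -, rfl⟩ := mem_image.1 hy
    simpa only [e.apply_eq_iff_eq, Subtype.mk.injEq] using hq₀ i
  · have : q₀ i = q₀ j := congrArg Subtype.val (e.injective hij)
    exact congrArg Prod.fst this

end Fairlets

section Rearrangement

theorem sum_section_apply_of_ne {R ι : Type*} [Fintype R] [DecidableEq R] [Fintype ι]
    [DecidableEq ι] {q : R → ι} {s : ι → R} {C : ℕ} (hq : ∀ x, #{i | q i = x} = C)
    (hs : ∀ x, q (s x) = x) (w : R → ℕ) :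
    ∑ i with s (q i) ≠ i, w (s (q i)) = (C - 1) * ∑ x, w (s x) := by
  have h_erase : ∀ x, #{i | s (q i) ≠ i ∧ q i = x} = C - 1 := fun x => by
    rw [← hq x, ← card_erase_of_mem (a := s x) (by simp [hs])]
    congr 1
    grind
  calc ∑ i with s (q i) ≠ i, w (s (q i))
      = ∑ x, ∑ i with s (q i) ≠ i ∧ q i = x, w (s x) := by
        simp only [← filter_filter, sum_fiberwise']
    _ = (C - 1) * ∑ x, w (s x) := by
        simp only [sum_const, h_erase, smul_eq_mul, mul_sum]

variable {γ : Fin m → Fin c}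

-- Refine both clusterings to fairlets and let `t` send every row to the common representative of
-- its `f`-fairlet; `G` maps this fairlet onto the `h`-fairlet of the same representative.
theorem FairLabeling.exists_matching {B B' : Type*} [DecidableEq B] [DecidableEq B']
    (hm : 0 < m) {f : Fin m → B} {h : Fin m → B'} (hf : FairLabeling γ f)
    (hh : FairLabeling γ h) (w : Fin m → ℕ) :
    ∃ (t : Fin m → Fin m) (G : Equiv.Perm (Fin m)), FairLabeling γ t ∧ (∀ i, f (t i) = f i) ∧
      (∀ i, γ (G i) = γ i) ∧ (∀ i, h (G i) = h (t i)) ∧ (∀ i, t i = i → G i = i) ∧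
      fairletSize γ * ∑ i with t i ≠ i, w (t i) ≤ (fairletSize γ - 1) * ∑ i, w i := by
  obtain ⟨q, hq, hfq⟩ := hf.exists_fairlet_refinement hm
  obtain ⟨p, hp, hhp⟩ := hh.exists_fairlet_refinement hm
  obtain ⟨π, s, hqs, hps, hs_sum⟩ := exists_common_transversal_sum_le (fairletSize_pos hm γ).ne'
    (fun x => (hq x).2) (fun x => (hp x).2) fun i => (w i : ℚ)
  have h_count : ∀ y, #{i | (π (q i), γ i) = y} = #{i | (p i, γ i) = y} := by
    rintro ⟨x, z⟩
    simp only [Prod.mk.injEq, ← π.eq_symm_apply, ← filter_filter]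
    rw [(hq _).card_filter hm, (hp _).card_filter hm]
  obtain ⟨G, hG, hG_fix⟩ := exists_perm_comp_eq_of_card_fiber_eq h_count
  simp only [Prod.mk.injEq, and_true] at hG hG_fix
  refine ⟨fun i => s (q i), G, FairLabeling.comp (fun x => (hq x).1) s, fun i => hfq (hqs _),
    fun i => (hG i).2, fun i => hhp ((hG i).1.trans (hps _).symm), fun i hi => hG_fix i ?_, ?_⟩
  · exact (hps _).symm.trans (congrArg p hi)
  · rw [sum_section_apply_of_ne (fun x => (hq x).2) hqs, mul_left_comm]
    exact Nat.mul_le_mul_left _ (mod_cast hs_sum)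

theorem hammingDist_quadrangle {ι : Type*} [Fintype ι] {β : ι → Type*} [∀ i, DecidableEq (β i)]
    (x x' y y' : ∀ i, β i) :
    hammingDist x y ≤ hammingDist x y' + hammingDist x' y' + hammingDist x' y := by
  have h₁ := hammingDist_triangle x y' y
  have h₂ := hammingDist_triangle y' x' y
  rw [hammingDist_comm y' x'] at h₂
  omega

variable {α : Type*} [DecidableEq α]

theorem editCost_eq_sum_hammingDist (M M' : Fin m → Fin n → α) :
    editCost M M' = ∑ i, hammingDist (M i) (M' i) := by
  simp only [editCost, hammingDist, card_filter, Fintype.sum_prod_type]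

/-- The type of row `i` if that type is `M`-fair, and `none` otherwise: the clustering of `M` with
all unfair clusters merged. -/
def fairType (γ : Fin m → Fin c) (M : Fin m → Fin n → α) (i : Fin m) : Option (Fin n → α) :=
  if fairSet γ (cluster M (M i)) then some (M i) else none

theorem fairType_eq_some_iff {M : Fin m → Fin n → α} {i : Fin m} {τ : Fin n → α} :
    fairType γ M i = some τ ↔ M i = τ ∧ fairSet γ (cluster M τ) := by
  grind [fairType]

theorem fairLabeling_fairType (M : Fin m → Fin n → α) : FairLabeling γ (fairType γ M) := by
  have h_some : ∀ τ, fairSet γ {i | fairType γ M i = some τ} := fun τ => by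
    by_cases hτ : fairSet γ (cluster M τ)
    · simp only [fairType_eq_some_iff, hτ, and_true]
      exact hτ
    · simpa only [fairType_eq_some_iff, hτ, and_false, filter_false] using fairSet_empty
  rintro (_ | τ)
  · exact fairSet_univ.filter_eq_none h_some
  · exact h_some τ

theorem exists_fair_rearrangement (hm : 0 < m) (M : Fin m → Fin n → α) {N : Fin m → Fin n → α}
    (hN : FairLabeling γ N) :
    ∃ H : Equiv.Perm (Fin m), FairLabeling γ (fun i => (fairType γ M i, N (H i))) ∧
      fairletSize γ * editCost M (fun i => N (H i)) ≤ (3 * fairletSize γ - 2) * editCost M N := by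
  simp only [editCost_eq_sum_hammingDist]
  obtain ⟨t, G, ht, hft, hG_col, hNG, hG_fix, ht_sum⟩ := (fairLabeling_fairType M).exists_matching
    hm hN fun i => hammingDist (M i) (N i)
  obtain ⟨H, hH_col, hH_eq, hH_sum⟩ := exists_perm_eqOn_sum_le
    (d := fun i j => hammingDist (M i) (N j)) (fun _ _ _ _ => hammingDist_quadrangle _ _ _ _)
    hG_col {i | fairType γ M i ≠ none ∧ G i ≠ i}
  have hNH : ∀ i, fairType γ M i ≠ none → N (H i) = N (t i) := fun i hi => by
    rw [hH_eq i (by grind), hNG]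
  have h_moved : ∑ i with fairType γ M i ≠ none ∧ G i ≠ i, hammingDist (M i) (N (G i)) ≤
      ∑ i with t i ≠ i, hammingDist (M (t i)) (N (t i)) := by
    have hMt : ∀ i, fairType γ M i ≠ none → M i = M (t i) := fun i hi => by
      obtain ⟨τ, hτ⟩ := Option.ne_none_iff_exists'.1 hi
      rw [(fairType_eq_some_iff.1 hτ).1, (fairType_eq_some_iff.1 ((hft i).trans hτ)).1]
    calc _ = ∑ i with fairType γ M i ≠ none ∧ G i ≠ i, hammingDist (M (t i)) (N (t i)) :=
          sum_congr rfl fun i hi => by rw [hNG, hMt i (mem_filter.1 hi).2.1]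
      _ ≤ _ := sum_le_sum_of_subset fun i hi => by grind
  refine ⟨H, (hN.comp_perm hH_col).prodMk fun τ σ => ?_, ?_⟩
  · convert ht.fairSet_filter fun j => fairType γ M j = some τ ∧ N j = σ using 1
    grind
  · have hpos := fairletSize_pos hm γ
    calc fairletSize γ * ∑ i, hammingDist (M i) (N (H i))
        ≤ fairletSize γ * (∑ i, hammingDist (M i) (N i) +
          2 * ∑ i with t i ≠ i, hammingDist (M (t i)) (N (t i))) := by
          gcongr
          exact hH_sum.trans (by gcongr)
      _ ≤ fairletSize γ * ∑ i, hammingDist (M i) (N i) +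
          2 * ((fairletSize γ - 1) * ∑ i, hammingDist (M i) (N i)) := by
          rw [mul_add, mul_left_comm]
          gcongr
      _ = (3 * fairletSize γ - 2) * ∑ i, hammingDist (M i) (N i) := by
          rw [← mul_assoc, ← add_mul]
          congr 1
          omega

end Rearrangement

section Rounding

/-- A map `ρ` sending every vector to a nearest vector of `T` in Hamming distance. -/
structure IsNearestMap {ι : Type*} [Fintype ι] {β : ι → Type*} [∀ i, DecidableEq (β i)]
    (T : Finset (∀ i, β i)) (ρ : (∀ i, β i) → ∀ i, β i) : Prop where
  mem : ∀ x, ρ x ∈ T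
  dist_le : ∀ x, ∀ y ∈ T, hammingDist x (ρ x) ≤ hammingDist x y

section NearestMap

variable {ι : Type*} [Fintype ι] {β : ι → Type*} [∀ i, DecidableEq (β i)] {T : Finset (∀ i, β i)}

theorem exists_isNearestMap (hT : T.Nonempty) : ∃ ρ, IsNearestMap T ρ := by
  choose ρ hρ_mem hρ_le using fun x => exists_min_image T (hammingDist x) hT
  exact ⟨ρ, hρ_mem, hρ_le⟩

theorem IsNearestMap.apply_of_mem {ρ : (∀ i, β i) → ∀ i, β i} (hρ : IsNearestMap T ρ)
    {x : ∀ i, β i} (hx : x ∈ T) : ρ x = x := by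
  have h := hρ.dist_le x x hx
  rw [hammingDist_self, Nat.le_zero, hammingDist_eq_zero] at h
  exact h.symm

end NearestMap

variable {α : Type*} [DecidableEq α] {γ : Fin m → Fin c} {M N : Fin m → Fin n → α}
  {μ ν : (Fin n → α) → Fin n → α} {T : Finset (Fin n → α)}

theorem mem_types (M : Fin m → Fin n → α) (i : Fin m) : M i ∈ types M :=
  mem_image_of_mem _ (mem_univ i)

/-- The matrix obtained by applying `μ` to the rows of `M` in fair clusters and replacing the other
rows by their counterparts in `N` under `ν`. -/
def roundedMatrix (γ : Fin m → Fin c) (M N : Fin m → Fin n → α) (μ ν : (Fin n → α) → Fin n → α) :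
    Fin m → Fin n → α :=
  fun i => (fairType γ M i).elim (ν (N i)) μ

theorem roundedMatrix_of_fairSet {τ : Fin n → α} (hτ : fairSet γ (cluster M τ)) {i : Fin m}
    (hi : M i = τ) : roundedMatrix γ M N μ ν i = μ τ := by
  rw [roundedMatrix, fairType_eq_some_iff.2 ⟨hi, hτ⟩, Option.elim_some]

theorem fairMatrix_roundedMatrix (h : FairLabeling γ fun i => (fairType γ M i, N i)) :
    fairMatrix γ (roundedMatrix γ M N μ ν) :=
  fairMatrix_iff_fairLabeling.2 (h.comp fun x => x.1.elim (ν x.2) μ)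

theorem roundedMatrix_mem (hμ : IsNearestMap T μ) (hν : ∀ i, ν (N i) ∈ T) (i : Fin m) :
    roundedMatrix γ M N μ ν i ∈ T := by
  unfold roundedMatrix
  cases fairType γ M i with
  | none => exact hν i
  | some τ => exact hμ.mem τ

theorem types_roundedMatrix_subset (hμ : IsNearestMap T μ) (hν : ∀ i, ν (N i) ∈ T) :
    types (roundedMatrix γ M N μ ν) ⊆ T :=
  image_subset_iff.2 fun i _ => roundedMatrix_mem hμ hν i

theorem roundedMatrix_fixes_or_moves_fair_cluster (hμ : IsNearestMap T μ) (hν : ∀ i, ν (N i) ∈ T)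
    {τ : Fin n → α} (hτ : fairSet γ (cluster M τ)) :
    (∀ i, M i = τ → roundedMatrix γ M N μ ν i = τ) ∨
      ((∀ i, roundedMatrix γ M N μ ν i ≠ τ) ∧ ∀ i, M i = τ → roundedMatrix γ M N μ ν i = μ τ) := by
  by_cases hτT : τ ∈ T
  · exact .inl fun i hi => (roundedMatrix_of_fairSet hτ hi).trans (hμ.apply_of_mem hτT)
  · exact .inr ⟨fun i hi => hτT (hi ▸ roundedMatrix_mem hμ hν i),
      fun i hi => roundedMatrix_of_fairSet hτ hi⟩

theorem editCost_roundedMatrix_le (hμ : IsNearestMap T μ) (hν : ∀ i, ν (N i) ∈ T) :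
    editCost M (roundedMatrix γ M N μ ν) ≤ editCost M N + ∑ i, hammingDist (N i) (ν (N i)) := by
  rw [editCost_eq_sum_hammingDist, editCost_eq_sum_hammingDist, ← sum_add_distrib]
  refine sum_le_sum fun i _ => le_trans ?_ (hammingDist_triangle _ _ _)
  cases hi : fairType γ M i with
  | none => rw [roundedMatrix, hi, Option.elim_none]
  | some τ =>
    obtain ⟨rfl, hτ⟩ := fairType_eq_some_iff.1 hi
    rw [roundedMatrix_of_fairSet hτ rfl]
    exact hμ.dist_le _ _ (hν i)

theorem sum_hammingDist_nearest_le (hν : IsNearestMap (types M) ν) :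
    ∑ i, hammingDist (N i) (ν (N i)) ≤ editCost M N := by
  rw [editCost_eq_sum_hammingDist]
  refine sum_le_sum fun i _ => ?_
  rw [hammingDist_comm (M i)]
  exact hν.dist_le _ _ (mem_types M i)

end Rounding

theorem nice_solution_approx_general {α : Type*} [DecidableEq α] (hm : 0 < m) (γ : Fin m → Fin c)
    (M : Fin m → Fin n → α) (k r : ℕ)
    (h : ∃ Mstar : Fin m → Fin n → α, fairMatrix γ Mstar ∧ editCost M Mstar ≤ k ∧ dr Mstar ≤ r) :
    ∃ M' : Fin m → Fin n → α, fairMatrix γ M' ∧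
      dr M' ≤ r ∧
      types M' ⊆ types M ∧
      (∀ τ : Fin n → α, fairSet γ (cluster M τ) →
        ((∀ i, M i = τ → M' i = τ) ∨
          ((∀ i, M' i ≠ τ) ∧ ∀ i i', M i = τ → M i' = τ → M' i = M' i'))) ∧
      fairletSize γ * editCost M M' ≤ (4 * fairletSize γ - 2) * k := by
  obtain ⟨N, hN, hNk, hNr⟩ := h
  obtain ⟨H, hH_fair, hH_cost⟩ :=
    exists_fair_rearrangement hm M (fairMatrix_iff_fairLabeling.1 hN)
  obtain ⟨ν, hν⟩ := exists_isNearestMap ⟨M ⟨0, hm⟩, mem_types M _⟩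
  let T := (types N).image ν
  have hνT : ∀ i, ν (N i) ∈ T := fun i => mem_image_of_mem ν (mem_types N i)
  obtain ⟨μ, hμ⟩ := exists_isNearestMap ⟨_, hνT ⟨0, hm⟩⟩
  have h_types := types_roundedMatrix_subset (γ := γ) (M := M) hμ fun i => hνT (H i)
  refine ⟨_, fairMatrix_roundedMatrix hH_fair, ?_, h_types.trans ?_, fun τ hτ => ?_, ?_⟩
  · exact (card_le_card h_types).trans (card_image_le.trans hNr)
  · exact image_subset_iff.2 fun σ _ => hν.mem σ
  · rcases roundedMatrix_fixes_or_moves_fair_cluster hμ (fun i => hνT (H i)) hτ with h | ⟨h, h'⟩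
    · exact .inl h
    · exact .inr ⟨h, fun i i' hi hi' => (h' i hi).trans (h' i' hi').symm⟩
  · have h_cost := editCost_roundedMatrix_le (γ := γ) (M := M) hμ fun i => hνT (H i)
    rw [Equiv.sum_comp H fun i => hammingDist (N i) (ν (N i))] at h_cost
    calc fairletSize γ * editCost M _
        ≤ fairletSize γ * (editCost M (fun i => N (H i)) + editCost M N) := by
          gcongr
          exact h_cost.trans (by gcongr; exact sum_hammingDist_nearest_le hν)
      _ ≤ (3 * fairletSize γ - 2) * editCost M N + fairletSize γ * editCost M N := by
          rw [mul_add]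
          gcongr
      _ = (4 * fairletSize γ - 2) * editCost M N := by
          rw [← add_mul]
          congr 1
          have := fairletSize_pos hm γ
          omega
      _ ≤ (4 * fairletSize γ - 2) * k := by gcongr

/-- Existence of a well-structured near-optimal fair solution. -/
theorem nice_solution_approx (hm : 0 < m) (hn : 0 < n) (γ : Fin m → Fin c)
    (hγ : Function.Surjective γ) (M : Fin m → Fin n → A) (k r : ℕ)
    (h : ∃ Mstar : Fin m → Fin n → A, fairMatrix γ Mstar ∧ editCost M Mstar ≤ k ∧ dr Mstar ≤ r) :
    ∃ M' : Fin m → Fin n → A, fairMatrix γ M' ∧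
      dr M' ≤ r ∧
      types M' ⊆ types M ∧
      (∀ τ : Fin n → A, fairSet γ (cluster M τ) →
        ((∀ i, ¬(M i = τ ∧ M' i ≠ τ)) ∨
          ((∀ i, M' i = τ → M i = τ) ∧
            ∀ i i', M i = τ → M' i ≠ τ → M i' = τ → M' i' ≠ τ → M' i = M' i'))) ∧
      fairletSize γ * editCost M M' ≤ (5 * fairletSize γ - 3) * k := by
  obtain ⟨M', hfair, hdr, htypes, hτ, hcost⟩ := nice_solution_approx_general hm γ M k r h
  exact ⟨M', hfair, hdr, htypes, by grind, hcost.trans (Nat.mul_le_mul_right k (by grind))⟩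
end

section
/- If S ⊆ [m] is a fair set w.r.t. γ, then the fairlet size c̃ divides |S|; in particular, every nonempty fair set has at least c̃ elements. -/
variable {m c : ℕ}

/-!
Fairness says that `m` divides `|γ|_z * |S|` for every color `z`, hence `m` divides the gcd of these
products, which is `gcd(|γ|_1, …, |γ|_c) * |S|`. The counts `|γ|_z` add up to `m`, so their gcd
divides `m` and can be cancelled.
-/

section

open Finset

variable {ι κ : Type*}

theorem dvd_finsetGcd_mul_iff {α : Type*} [CommMonoidWithZero α] [NormalizedGCDMonoid α]
    {t : Finset κ} {f : κ → α} {a b : α} :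
    a ∣ t.gcd f * b ↔ ∀ z ∈ t, a ∣ f z * b :=
  (gcd_mul_right' t f b).dvd_iff_dvd_right.symm.trans dvd_gcd_iff

theorem gcd_card_fiberwise_dvd_card [DecidableEq κ] {s : Finset ι} {t : Finset κ} {γ : ι → κ}
    (hγ : Set.MapsTo γ s t) : (t.gcd fun z => #{i ∈ s | γ i = z}) ∣ #s := by
  rw [card_eq_sum_card_fiberwise hγ]
  exact dvd_sum fun z hz => gcd_dvd hz

theorem fairletSize_dvd_card_of_fair_general [Fintype ι] [Nonempty ι] [Fintype κ] [DecidableEq κ]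
    (γ : ι → κ) (S : Finset ι)
    (hS : ∀ z, Fintype.card ι * #{i ∈ S | γ i = z} = #{i | γ i = z} * #S) :
    Fintype.card ι / (univ.gcd fun z => #{i | γ i = z}) ∣ #S := by
  have hgcd : (univ.gcd fun z => #{i | γ i = z}) ∣ Fintype.card ι :=
    gcd_card_fiberwise_dvd_card fun i _ => mem_coe.2 (mem_univ (γ i))
  have hgcd_pos : 0 < univ.gcd fun z => #{i | γ i = z} :=
    Nat.pos_of_dvd_of_pos hgcd Fintype.card_pos
  rw [Nat.div_dvd_iff_dvd_mul hgcd hgcd_pos, dvd_finsetGcd_mul_iff]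
  exact fun z _ => Dvd.intro _ (hS z)

end

/-- The fairlet size divides the cardinality of every fair set;
in particular every nonempty fair set has at least `c̃` elements. -/
theorem fairletSize_dvd_card_of_fair (hm : 0 < m) (γ : Fin m → Fin c)
    (hγ : Function.Surjective γ) (S : Finset (Fin m)) (hS : fairSet γ S) :
    fairletSize γ ∣ S.card ∧ (S.Nonempty → fairletSize γ ≤ S.card) := by
  have : Nonempty (Fin m) := Fin.pos_iff_nonempty.mp hm
  have hdvd : fairletSize γ ∣ S.card := by
    simpa only [Fintype.card_fin] using!
      fairletSize_dvd_card_of_fair_general γ S (by simpa only [Fintype.card_fin] using! hS)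
  exact ⟨hdvd, fun hne => Nat.le_of_dvd hne.card_pos hdvd⟩
end
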